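/- arXiv:1505.00617 — 2 statements merged into one kernel-verified Lean document; each statement's English description precedes it below -/
import Mathlib

section
/- Let n ∈ ℕ, let H ⊆ ℝ with |H| ≥ n+2, let ω = (ω_1,…,ω_n) be an n-dimensional positive Chebyshev system over H, and let ω_{n+1} : H → ℝ be such that ω* = (ω_1,…,ω_n,ω_{n+1}) is an (n+1)-dimensional positive Chebyshev system over H. Let x_0 < x_1 < ⋯ < x_{n+1} be elements of H. Then, for every j with 0 ≤ j ≤ n+1, there exists a constant A_j ∈ [0,1] such that for every function f : {x_0,…,x_{n+1}} → ℝ, [x_0,…,x_{j-1},x_{j+1},…,x_{n+1}; f]_{ω*} = A_j·[x_0,…,x_n; f]_{ω*} + (1−A_j)·[x_1,…,x_{n+1}; f]_{ω*}. -/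
/-- `Phi ω x` is the determinant `det(ωᵢ(xⱼ))` of an `n`-tuple of functions
evaluated at an `n`-tuple of points. -/
noncomputable def Phi {n : ℕ} (ω : Fin n → ℝ → ℝ) (x : Fin n → ℝ) : ℝ :=
  (Matrix.of fun i j => ω i (x j)).det

/-- `ω` is an `n`-dimensional positive Chebyshev system over `H`:
`Phi ω` is positive on all strictly increasing `n`-tuples of elements of `H`. -/
def IsPosChebyshev {n : ℕ} (ω : Fin n → ℝ → ℝ) (H : Set ℝ) : Prop :=
  ∀ x : Fin n → ℝ, StrictMono x → (∀ j, x j ∈ H) → 0 < Phi ω x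

/-- The generalized `ω*`-divided difference `[x₀,…,xₙ; f]_{ω*}`, where
`ω* = (ω₁,…,ωₙ,ω')`:  `Φ_{(ω,f)}(x) / Φ_{ω*}(x)`. -/
noncomputable def divDiff {n : ℕ} (ω : Fin n → ℝ → ℝ) (ω' : ℝ → ℝ) (f : ℝ → ℝ)
    (x : Fin (n + 1) → ℝ) : ℝ :=
  Phi (Fin.snoc ω f) x / Phi (Fin.snoc ω ω') x

lemma Phi_snoc_expand {n : ℕ} (ω : Fin n → ℝ → ℝ) (g : ℝ → ℝ) (y : Fin (n + 1) → ℝ) :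
    Phi (Fin.snoc ω g : Fin (n + 1) → ℝ → ℝ) y =
      ∑ k : Fin (n + 1), (-1) ^ (n + (k : ℕ)) * g (y k) * Phi ω (fun i => y (k.succAbove i)) := by
  unfold Phi
  rw [Matrix.det_succ_row _ (Fin.last n)]
  refine Finset.sum_congr rfl fun k _ => ?_
  congr 1
  · simp
  · congr 1
    ext i l
    simp [Matrix.submatrix]

lemma Phi_snoc_self {n : ℕ} (ω : Fin n → ℝ → ℝ) (i : Fin n) (y : Fin (n + 1) → ℝ) :
    Phi (Fin.snoc ω (ω i) : Fin (n + 1) → ℝ → ℝ) y = 0 := by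
  unfold Phi
  refine Matrix.det_zero_of_row_eq (i := i.castSucc) (j := Fin.last n) (Fin.castSucc_lt_last i).ne ?_
  ext l
  simp

lemma Phi_snoc_sub {n : ℕ} (ω : Fin n → ℝ → ℝ) (g : ℝ → ℝ) (c : Fin n → ℝ)
    (y : Fin (n + 1) → ℝ) :
    Phi (Fin.snoc ω (fun t => g t - ∑ i, c i * ω i t) : Fin (n + 1) → ℝ → ℝ) y =
      Phi (Fin.snoc ω g : Fin (n + 1) → ℝ → ℝ) y := by
  have h0 : ∑ i, c i * Phi (Fin.snoc ω (ω i) : Fin (n + 1) → ℝ → ℝ) y = 0 := by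
    simp [Phi_snoc_self]
  rw [← sub_zero (Phi (Fin.snoc ω g : Fin (n + 1) → ℝ → ℝ) y), ← h0]
  simp only [Phi_snoc_expand, Finset.mul_sum]
  rw [Finset.sum_comm, ← Finset.sum_sub_distrib]
  refine Finset.sum_congr rfl fun k _ => ?_
  rw [mul_sub, sub_mul, Finset.mul_sum, Finset.sum_mul]
  congr 1
  exact Finset.sum_congr rfl fun i _ => by ring

lemma Phi_three_term {m : ℕ} (ω : Fin (m + 1) → ℝ → ℝ) (x : Fin (m + 3) → ℝ)
    (j : Fin (m + 3)) (hj0 : j ≠ 0) (hjl : j ≠ Fin.last _)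
    (ha : Phi ω (fun i => x i.succ.castSucc) ≠ 0) (g : ℝ → ℝ) :
    Phi ω (fun i => x i.succ.castSucc) *
        Phi (Fin.snoc ω g : Fin (m + 2) → ℝ → ℝ) (fun i => x (j.succAbove i)) =
      Phi ω (fun i => x (j.succAbove i.succ)) *
        Phi (Fin.snoc ω g : Fin (m + 2) → ℝ → ℝ) (fun i => x i.castSucc) +
      Phi ω (fun i => x (j.succAbove i.castSucc)) *
        Phi (Fin.snoc ω g : Fin (m + 2) → ℝ → ℝ) (fun i => x i.succ) := by
  obtain ⟨c, hc⟩ : ∃ c : Fin (m + 1) → ℝ, ∀ k : Fin (m + 1),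
      ∑ i, c i * ω i (x k.succ.castSucc) = g (x k.succ.castSucc) := by
    let M : Matrix (Fin (m + 1)) (Fin (m + 1)) ℝ := Matrix.of fun i k => ω i (x k.succ.castSucc)
    have hM : IsUnit M.det := isUnit_iff_ne_zero.mpr ha
    refine ⟨Matrix.vecMul (fun k => g (x k.succ.castSucc)) M⁻¹, fun k => ?_⟩
    have := congrFun (Matrix.vecMul_vecMul (fun k => g (x k.succ.castSucc)) M⁻¹ M) k
    rw [Matrix.nonsing_inv_mul _ hM, Matrix.vecMul_one] at this
    exact this
  rw [← Phi_snoc_sub ω g c, ← Phi_snoc_sub ω g c, ← Phi_snoc_sub ω g c]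
  set h : ℝ → ℝ := fun t => g t - ∑ i, c i * ω i t with hh
  have hz : ∀ k : Fin (m + 3), k ≠ 0 → k ≠ Fin.last _ → h (x k) = 0 := by
    intro k hk0 hkl
    obtain ⟨k, rfl⟩ := Fin.exists_castSucc_eq.mpr hkl
    obtain ⟨k, rfl⟩ := Fin.exists_succ_eq.mpr (show k ≠ 0 by rintro rfl; simp at hk0)
    simp only [hh, hc, sub_self]
  have hQ : Phi (Fin.snoc ω h : Fin (m + 2) → ℝ → ℝ) (fun i => x i.castSucc) =
      (-1) ^ (m + 1) * h (x 0) * Phi ω (fun i => x i.succ.castSucc) := by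
    rw [Phi_snoc_expand, Finset.sum_eq_single 0]
    · simp
    · intro k _ hk
      rw [hz k.castSucc (by simpa using hk) (Fin.castSucc_lt_last k).ne]; simp
    · simp
  have hR : Phi (Fin.snoc ω h : Fin (m + 2) → ℝ → ℝ) (fun i => x i.succ) =
      h (x (Fin.last _)) * Phi ω (fun i => x i.succ.castSucc) := by
    rw [Phi_snoc_expand, Finset.sum_eq_single (Fin.last _)]
    · simp [← two_mul]
    · intro k _ hk
      rw [hz k.succ (Fin.succ_ne_zero k) (by simpa [← Fin.succ_last] using hk)]; simp
    · simp
  have hP : Phi (Fin.snoc ω h : Fin (m + 2) → ℝ → ℝ) (fun i => x (j.succAbove i)) =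
      (-1) ^ (m + 1) * h (x 0) * Phi ω (fun i => x (j.succAbove i.succ)) +
      h (x (Fin.last _)) * Phi ω (fun i => x (j.succAbove i.castSucc)) := by
    have e0 : j.succAbove 0 = 0 := Fin.succAbove_ne_zero_zero hj0
    have el : j.succAbove (Fin.last _) = Fin.last _ := Fin.succAbove_ne_last_last hjl
    rw [Phi_snoc_expand, Finset.sum_eq_add (0 : Fin (m + 2)) (Fin.last _)]
    · simp [e0, el, ← two_mul]
    · exact (Fin.last_pos).ne
    · rintro k _ ⟨hk0, hkl⟩
      rw [hz (j.succAbove k) (fun H => hk0 (Fin.succAbove_right_injective (H.trans e0.symm)))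
        (fun H => hkl (Fin.succAbove_right_injective (H.trans el.symm)))]
      simp
    · simp
    · simp
  rw [hP, hQ, hR]
  ring

/-- **Lemma 1.** Dropping the `j`-th point from a strictly increasing `(n+2)`-tuple,
the resulting divided difference is a convex combination (with a coefficient
`A ∈ [0,1]` independent of `f`) of the divided differences on the first and the
last `n+1` points. -/
theorem divDiff_dropPoint_convexCombination
    (n : ℕ) (hn : 0 < n) (H : Set ℝ) (hH : (↑(n + 2) : ℕ∞) ≤ H.encard)
    (ω : Fin n → ℝ → ℝ) (ω' : ℝ → ℝ)
    (hω : IsPosChebyshev ω H) (hωs : IsPosChebyshev (Fin.snoc ω ω') H)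
    (x : Fin (n + 2) → ℝ) (hx : StrictMono x) (hxH : ∀ i, x i ∈ H)
    (j : Fin (n + 2)) :
    ∃ A ∈ Set.Icc (0 : ℝ) 1, ∀ f : ℝ → ℝ,
      divDiff ω ω' f (fun i => x (j.succAbove i)) =
        A * divDiff ω ω' f (fun i : Fin (n + 1) => x i.castSucc) +
          (1 - A) * divDiff ω ω' f (fun i : Fin (n + 1) => x i.succ) := by
  rcases eq_or_ne j 0 with rfl | hj0
  · exact ⟨0, by simp, fun f => by simp⟩
  rcases eq_or_ne j (Fin.last _) with rfl | hjl
  · exact ⟨1, by simp, fun f => by simp⟩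
  obtain ⟨m, rfl⟩ : ∃ m, n = m + 1 := ⟨n - 1, by omega⟩
  have ha : 0 < Phi ω (fun i => x i.succ.castSucc) :=
    hω _ (fun a b hab => hx (by simpa using hab)) (fun _ => hxH _)
  have hb : 0 < Phi ω (fun i => x (j.succAbove i.succ)) :=
    hω _ (fun a b hab => hx (Fin.strictMono_succAbove j (by simpa using hab))) (fun _ => hxH _)
  have hc : 0 < Phi ω (fun i => x (j.succAbove i.castSucc)) :=
    hω _ (fun a b hab => hx (Fin.strictMono_succAbove j (by simpa using hab))) (fun _ => hxH _)
  have hP := hωs (fun i => x (j.succAbove i))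
    (fun a b hab => hx (Fin.strictMono_succAbove j hab)) (fun _ => hxH _)
  have hQ := hωs (fun i => x i.castSucc) (fun a b hab => hx (by simpa using hab)) (fun _ => hxH _)
  have hR := hωs (fun i => x i.succ) (fun a b hab => hx (by simpa using hab)) (fun _ => hxH _)
  have key := Phi_three_term ω x j hj0 hjl ha.ne'
  have k' := key ω'
  unfold divDiff
  generalize Phi ω (fun i => x i.succ.castSucc) = a at *
  generalize Phi ω (fun i => x (j.succAbove i.succ)) = b at *
  generalize Phi ω (fun i => x (j.succAbove i.castSucc)) = c at *
  generalize Phi (Fin.snoc ω ω') (fun i => x (j.succAbove i)) = P at *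
  generalize Phi (Fin.snoc ω ω') (fun i => x i.castSucc) = Q at *
  generalize Phi (Fin.snoc ω ω') (fun i => x i.succ) = R at *
  have hbQ := mul_pos hb hQ
  have hcR := mul_pos hc hR
  have haP := mul_pos ha hP
  refine ⟨b * Q / (a * P), ⟨by positivity, ?_⟩, fun f => ?_⟩
  · rw [div_le_one haP]; linarith
  · have kf := key f
    have h1 : 1 - b * Q / (a * P) = c * R / (a * P) := by
      rw [eq_div_iff haP.ne', sub_mul, div_mul_cancel₀ _ haP.ne']; linarith
    rw [h1]
    field_simp
    linarith
end

section
/- Let I ⊆ ℝ be a nondegenerate interval, n ∈ ℕ, and let ω be an n-dimensional positive Chebyshev system over I. Let t ∈ ℝ₊ⁿ and f : I → ℝ. If f is cyclically (t,ω)-convex on I, then f is (r,ω)-convex on I for every r ∈ ℚ₊ⁿ (every n-tuple of positive rationals). -/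
/-- The partial sum `t₁ + ⋯ + tⱼ` (empty for `j = 0`, everything for `j = n`). -/
noncomputable def psum {n : ℕ} (t : Fin n → ℝ) (j : Fin (n + 1)) : ℝ :=
  ∑ i ∈ Finset.univ.filter (fun i : Fin n => (i : ℕ) < (j : ℕ)), t i

/-- `f` is `(t,ω)`-convex on `J`:
`Φ_{(ω,f)}(x, x+t₁h, x+(t₁+t₂)h, …, x+(t₁+⋯+tₙ)h) ≥ 0`
for all `x ∈ J` and `h > 0` with `x+(t₁+⋯+tₙ)h ∈ J`. -/
def TOmegaConvexOn {n : ℕ} (ω : Fin n → ℝ → ℝ) (t : Fin n → ℝ) (J : Set ℝ) (f : ℝ → ℝ) : Prop :=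
  ∀ x ∈ J, ∀ h : ℝ, 0 < h → x + psum t (Fin.last n) * h ∈ J →
    0 ≤ Phi (Fin.snoc ω f) (fun j => x + psum t j * h)

theorem det_ins {α : Type*} {m : ℕ} (w : Fin (m+1) → α → ℝ) (S : Fin m → α) (p : Fin (m+1)) (x : α) :
    (Matrix.of fun i j => w i ((p.insertNth x S : Fin (m+1) → α) j)).det =
      (-1)^(p:ℕ) * ∑ i : Fin (m+1), w i x * ((-1)^(i:ℕ) *
        (Matrix.of fun a b => w (i.succAbove a) (S b)).det) := by
  rw [Matrix.det_succ_column _ p, Finset.mul_sum]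
  refine Finset.sum_congr rfl fun i _ => ?_
  have : ((Matrix.of fun i j => w i ((p.insertNth x S : Fin (m+1) → α) j)).submatrix i.succAbove p.succAbove)
      = (Matrix.of fun a b => w (i.succAbove a) (S b)) := by
    ext a b; simp
  rw [this]
  simp [pow_add]
  ring

theorem three_term {α : Type*} {m : ℕ} (w : Fin (m+1) → α → ℝ) (v : Fin (m+2) → α → ℝ)
    (hvw : ∀ i a, v (Fin.castSucc i) a = w i a)
    (S : Fin m → α) (q : Fin (m+1)) (a b z : α)
    (ha : 0 < (Matrix.of fun i j => w i ((Fin.insertNth 0 a S : Fin (m+1) → α) j)).det)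
    (hz : 0 < (Matrix.of fun i j => w i ((q.insertNth z S : Fin (m+1) → α) j)).det)
    (hb : 0 < (Matrix.of fun i j => w i (((Fin.last m).insertNth b S : Fin (m+1) → α) j)).det)
    (h0 : 0 ≤ (Matrix.of fun i j => v i ((Fin.snoc (q.insertNth z S : Fin (m+1) → α) b : Fin (m+2) → α) j)).det)
    (h1 : 0 ≤ (Matrix.of fun i j => v i ((Fin.cons a (q.insertNth z S : Fin (m+1) → α) : Fin (m+2) → α) j)).det) :
    0 ≤ (Matrix.of fun i j => v i ((Fin.cons a (Fin.snoc S b : Fin (m+1) → α) : Fin (m+2) → α) j)).det := by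
  classical
  set M : Fin (m+1) → ℝ := fun i => (-1)^(i:ℕ) * (Matrix.of fun a b => w (i.succAbove a) (S b)).det with hM
  set G : α → ℝ := fun x => ∑ i : Fin (m+1), w i x * M i with hG
  have hdet : ∀ (p : Fin (m+1)) (x : α), (Matrix.of fun i j => w i ((p.insertNth x S : Fin (m+1) → α) j)).det
     = (-1)^(p:ℕ) * G x := fun p x => det_ins w S p x
  have hGS : ∀ j, G (S j) = 0 := by
    intro j
    have h := hdet 0 (S j)
    rw [Matrix.det_zero_of_column_eq (i := 0) (j := j.succ) (Fin.succ_ne_zero j).symm] at h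
    · simpa using h.symm
    · intro k; simp
  set y : Fin (m+3) → α := Fin.cons a (Fin.snoc (q.insertNth z S : Fin (m+1) → α) b : Fin (m+2) → α) with hy
  set D : Fin (m+3) → ℝ := fun j => (Matrix.of fun i l => v i (y (j.succAbove l))).det with hD
  have hrel : ∀ i : Fin (m+1), ∑ j : Fin (m+3), (-1)^(j:ℕ) * w i (y j) * D j = 0 := by
    intro i
    have e := Matrix.det_succ_row (Matrix.of fun (k : Fin (m+3)) (l : Fin (m+3)) =>
      (Fin.cons (w i) v : Fin (m+3) → α → ℝ) k (y l)) 0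
    rw [Matrix.det_zero_of_row_eq (i := 0) (j := i.castSucc.succ) (Fin.succ_ne_zero _).symm] at e
    · rw [e]
      refine Finset.sum_congr rfl fun j _ => ?_
      simp only [hD, Fin.val_zero, zero_add, Matrix.of_apply, Fin.cons_zero]
      congr 2
    · ext l; simp [hvw]
  have hsum : ∑ j : Fin (m+3), (-1)^(j:ℕ) * G (y j) * D j = 0 := by
    have : ∀ j : Fin (m+3), (-1)^(j:ℕ) * G (y j) * D j = ∑ i, M i * ((-1)^(j:ℕ) * w i (y j) * D j) := by
      intro j
      simp only [hG, Finset.mul_sum, Finset.sum_mul]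
      refine Finset.sum_congr rfl fun i _ => by ring
    simp only [this]
    rw [Finset.sum_comm]
    simp only [← Finset.mul_sum, hrel, mul_zero, Finset.sum_const_zero]
  rw [hdet] at ha hz hb
  rw [Fin.sum_univ_succ, Fin.sum_univ_castSucc, Fin.sum_univ_succAbove _ q] at hsum
  have y0 : y 0 = a := rfl
  have yq : y q.castSucc.succ = z := by simp [hy]
  have yS : ∀ j, y (q.succAbove j).castSucc.succ = S j := by intro j; simp [hy]
  have yl : y (Fin.last (m+1)).succ = b := by rw [hy, Fin.cons_succ, Fin.snoc_last]
  simp only [y0, yq, yS, yl, hGS, mul_zero, zero_mul, Finset.sum_const_zero, add_zero] at hsum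
  have D0 : D 0 = (Matrix.of fun i j => v i ((Fin.snoc (q.insertNth z S : Fin (m+1) → α) b : Fin (m+2) → α) j)).det := by
    simp [hD, hy]
  have Dl : D (Fin.last (m+1)).succ = (Matrix.of fun i j => v i ((Fin.cons a (q.insertNth z S : Fin (m+1) → α) : Fin (m+2) → α) j)).det := by
    simp only [hD, hy, Fin.cons_snoc_eq_snoc_cons]
    simp only [Fin.succ_last, Fin.succAbove_last, Fin.snoc_castSucc]
  have Dq : D q.castSucc.succ = (Matrix.of fun i j => v i ((Fin.cons a (Fin.snoc S b : Fin (m+1) → α) : Fin (m+2) → α) j)).det := by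
    simp only [hD, hy]
    congr 2
    ext i l
    congr 1
    refine Fin.cases ?_ (fun l => ?_) l
    · simp
    · refine Fin.lastCases ?_ (fun l => ?_) l
      · simp only [Fin.succ_succAbove_succ, Fin.cons_succ, Fin.snoc_last]
        rw [Fin.succAbove_of_lt_succ _ _ (by simp [Fin.lt_def]; omega)]
        rw [Fin.succ_last, Fin.snoc_last]
      · simp
  rw [← D0] at h0
  rw [← Dl] at h1
  rw [← Dq]
  have e1 : (-1:ℝ)^((q.castSucc.succ : Fin (m+3)) : ℕ) = - (-1)^(q:ℕ) := by simp [pow_succ]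
  have e2 : (-1:ℝ)^(((Fin.last (m+1)).succ : Fin (m+3)) : ℕ) = (-1)^m := by simp [pow_succ]
  rw [e1, e2] at hsum
  simp only [Fin.val_zero, pow_zero, one_mul, Fin.val_last] at hsum ha hb
  have p0 := mul_nonneg ha.le h0
  have p1 := mul_nonneg hb.le h1
  have : 0 ≤ ((-1)^(q:ℕ) * G z) * D q.castSucc.succ := by linarith
  exact nonneg_of_mul_nonneg_right this hz

theorem chain_nonneg {m : ℕ} (w : Fin (m+1) → ℕ → ℝ) (v : Fin (m+2) → ℕ → ℝ)
    (hvw : ∀ i a, v (Fin.castSucc i) a = w i a) (N : ℕ)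
    (hw : ∀ s : Fin (m+1) → ℕ, StrictMono s → (∀ j, s j ≤ N) → 0 < (Matrix.of fun i j => w i (s j)).det)
    (hv : ∀ c, c + (m+1) ≤ N → 0 ≤ (Matrix.of fun i (j : Fin (m+2)) => v i (c + j)).det) :
    ∀ d (s : Fin (m+2) → ℕ), StrictMono s → s (Fin.last _) ≤ N → s (Fin.last _) ≤ s 0 + d →
      0 ≤ (Matrix.of fun i j => v i (s j)).det := by
  intro d
  induction d with
  | zero =>
    intro s hs _ h
    have := hs (Fin.last_pos : (0 : Fin (m+2)) < Fin.last _)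
    omega
  | succ d ih =>
    intro s hs hN hd
    by_cases hc : ∀ j : Fin (m+1), s j.succ = s j.castSucc + 1
    · have hj : ∀ j : Fin (m+2), s j = s 0 + j := by
        intro j
        induction j using Fin.induction with
        | zero => simp
        | succ j ihj => rw [hc, ihj]; simp; omega
      have := hv (s 0) (by rw [hj (Fin.last _)] at hN; simpa using hN)
      simpa only [← hj] using this
    · push Not at hc
      obtain ⟨q, hq⟩ := hc
      have hq2 : s q.castSucc + 1 < s q.succ := by
        have := hs (Fin.castSucc_lt_succ (i := q)); omega
      set z := s q.castSucc + 1 with hz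
      set S : Fin m → ℕ := fun i => s i.succ.castSucc with hS
      have hseq : s = (Fin.cons (s 0) (Fin.snoc S (s (Fin.last _)) : Fin (m+1) → ℕ) : Fin (m+2) → ℕ) := by
        ext l
        refine Fin.cases ?_ (fun l => ?_) l
        · simp
        · refine Fin.lastCases ?_ (fun l => ?_) l
          · simp
          · simp [hS]
      have hzS : StrictMono (q.insertNth z S : Fin (m+1) → ℕ) := by
        have hlo : ∀ i : Fin m, i.castSucc < q → S i < z := by
          intro i hi
          have : s i.succ.castSucc ≤ s q.castSucc := hs.monotone (by
            simp [Fin.le_def, Fin.lt_def] at hi ⊢; omega)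
          simp only [hS]; omega
        have hhi : ∀ i : Fin m, q ≤ i.castSucc → z < S i := by
          intro i hi
          have : s q.succ ≤ s i.succ.castSucc := hs.monotone (by
            simp [Fin.le_def] at hi ⊢; omega)
          simp only [hS]; omega
        intro i j hij
        induction i using Fin.succAboveCases q with
        | x => 
          induction j using Fin.succAboveCases q with
          | x => exact absurd hij (lt_irrefl _)
          | p j =>
            simp only [Fin.insertNth_apply_same, Fin.insertNth_apply_succAbove]
            exact hhi j (by rwa [Fin.lt_succAbove_iff_le_castSucc] at hij)
        | p i =>
          induction j using Fin.succAboveCases q with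
          | x =>
            simp only [Fin.insertNth_apply_same, Fin.insertNth_apply_succAbove]
            exact hlo i (by rwa [Fin.succAbove_lt_iff_castSucc_lt] at hij)
          | p j =>
            simp only [Fin.insertNth_apply_succAbove, hS]
            apply hs
            have := (Fin.succAbove_lt_succAbove_iff).1 hij
            simpa using this
      have hz0 : s 0 < z := by
        have := hs.monotone (Fin.zero_le q.castSucc); omega
      have hzl : z < s (Fin.last _) := by
        have := hs.monotone (Fin.le_last q.succ); omega
      have hS0 : ∀ i, s 0 < S i := fun i => hs (by simp [Fin.lt_def])
      have hSl : ∀ i, S i < s (Fin.last _) := fun i => hs (by simp [Fin.lt_def])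
      have hzb : ∀ j, s 0 < (q.insertNth z S : Fin (m+1) → ℕ) j ∧ (q.insertNth z S : Fin (m+1) → ℕ) j < s (Fin.last _) := by
        intro j
        induction j using Fin.succAboveCases q with
        | x => simp [hz0, hzl]
        | p j => simp [hS0, hSl]
      have hSmono : StrictMono S := fun i j hij => hs (by simpa using hij)
      rw [hseq]
      refine three_term w v hvw S q _ _ z ?_ ?_ ?_ ?_ ?_
      · apply hw
        · rw [Fin.insertNth_zero']
          intro i j
          refine Fin.cases ?_ (fun i => ?_) i <;> refine Fin.cases ?_ (fun j => ?_) j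
          · simp
          · simp [hS0]
          · simp
          · simpa using fun h => hSmono h
        · intro j
          rw [Fin.insertNth_zero']
          refine Fin.cases ?_ (fun j => ?_) j
          · simp; omega
          · simpa using ((hSl j).le.trans hN)
      · exact hw _ hzS fun j => (hzb j).2.le.trans hN
      · apply hw
        · rw [Fin.insertNth_last']
          intro i j
          refine Fin.lastCases ?_ (fun i => ?_) i <;> refine Fin.lastCases ?_ (fun j => ?_) j
          · simp
          · intro h; exact absurd h (by simp [Fin.le_last])
          · simp [hSl]
          · simpa using fun h => hSmono h
        · intro j
          rw [Fin.insertNth_last']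
          refine Fin.lastCases ?_ (fun j => ?_) j
          · simpa using hN
          · simpa using ((hSl j).le.trans hN)
      · apply ih
        · intro i j
          refine Fin.lastCases ?_ (fun i => ?_) i <;> refine Fin.lastCases ?_ (fun j => ?_) j
          · simp
          · intro h; exact absurd h (by simp [Fin.le_last])
          · simpa using (hzb i).2
          · simpa using fun h => hzS h
        · simpa using hN
        · have := (hzb 0).1
          rw [Fin.snoc_last, ← Fin.castSucc_zero, Fin.snoc_castSucc]
          omega
      · apply ih
        · intro i j
          refine Fin.cases ?_ (fun i => ?_) i <;> refine Fin.cases ?_ (fun j => ?_) j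
          · simp
          · simpa using (hzb j).1
          · simp
          · simpa using fun h => hzS h
        · rw [← Fin.succ_last, Fin.cons_succ]
          exact (hzb _).2.le.trans hN
        · rw [← Fin.succ_last, Fin.cons_succ, Fin.cons_zero]
          have := (hzb (Fin.last m)).2
          rw [← Nat.add_assoc] at hd
          omega

theorem psum_eq {m : ℕ} (t : Fin (m+1) → ℝ) (j : Fin (m+2)) :
    psum t j = ∑ i ∈ Finset.range j, t (Fin.ofNat (m+1) i) := by
  unfold psum
  refine Finset.sum_bij (fun i _ => (i:ℕ)) ?_ ?_ ?_ ?_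
  · intro i hi; simpa using hi
  · intro i _ j _ h; exact Fin.ext h
  · intro b hb
    simp only [Finset.mem_range] at hb
    exact ⟨⟨b, by omega⟩, by simpa using hb, rfl⟩
  · intro i _; congr 1; ext; simp [Nat.mod_eq_of_lt i.2]

theorem rat_common {n : ℕ} (r : Fin n → ℚ) (hr : ∀ i, 0 < r i) :
    ∃ (q : ℕ) (k : Fin n → ℕ), 0 < q ∧ (∀ i, 0 < k i) ∧ ∀ i, (r i : ℝ) = k i / q := by
  have hq : 0 < ∏ i, (r i).den := Finset.prod_pos fun i _ => (r i).den_pos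
  refine ⟨∏ i, (r i).den, fun i => (r i).num.toNat * ∏ j ∈ Finset.univ.erase i, (r j).den, hq, ?_, ?_⟩
  · intro i
    refine Nat.mul_pos ?_ (Finset.prod_pos fun i _ => (r i).den_pos)
    have := Rat.num_pos.2 (hr i)
    omega
  · intro i
    have hn : ((r i).num.toNat : ℝ) = (r i).num := by
      have := Rat.num_pos.2 (hr i)
      exact_mod_cast Int.toNat_of_nonneg this.le
    rw [eq_div_iff (by exact_mod_cast hq.ne'), ← Finset.mul_prod_erase Finset.univ _ (Finset.mem_univ i)]
    push_cast
    rw [hn, ← mul_assoc]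
    congr 1
    exact_mod_cast Rat.mul_den_eq_num (r i)

/-- **Theorem 5.** If `f` is cyclically `(t,ω)`-convex on the nondegenerate interval `I`
(i.e. `(t∘π,ω)`-convex for every cyclic permutation `π`, here `π(i) = i + k` in `Fin n`),
then `f` is `(r,ω)`-convex on `I` for every `n`-tuple `r` of positive rationals. -/
theorem rational_tOmegaConvex_of_cyclically_tOmegaConvex
    (n : ℕ) (hn : 0 < n) (I : Set ℝ) (hI : I.OrdConnected)
    (hne : ∃ a ∈ I, ∃ b ∈ I, a < b)
    (ω : Fin n → ℝ → ℝ) (hω : IsPosChebyshev ω I)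
    (t : Fin n → ℝ) (ht : ∀ i, 0 < t i) (f : ℝ → ℝ)
    (hcyc : ∀ k : Fin n, TOmegaConvexOn ω (fun i => t (i + k)) I f) :
    ∀ r : Fin n → ℚ, (∀ i, 0 < r i) →
      TOmegaConvexOn ω (fun i => (r i : ℝ)) I f := by
  intro r hr x hx h hh hxI
  obtain ⟨m, rfl⟩ : ∃ m, n = m + 1 := ⟨n - 1, by omega⟩
  obtain ⟨Q, k, hQ, hk, hrk⟩ := rat_common r hr
  set τ : ℕ → ℝ := fun i => t (Fin.ofNat (m+1) i) with hτ
  have hτpos : ∀ i, 0 < τ i := fun i => ht _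
  set T : ℝ := ∑ i ∈ Finset.range (m+1), τ i with hT
  have hTpos : 0 < T := Finset.sum_pos (fun i _ => hτpos i) ⟨0, by simp⟩
  have hQ' : (0:ℝ) < Q := by exact_mod_cast hQ
  set g : ℝ := h / (Q * T) with hg
  have hgpos : 0 < g := by positivity
  set p : ℕ → ℝ := fun c => x + (∑ i ∈ Finset.range c, τ i) * g with hp
  have hpmono : StrictMono p := by
    refine strictMono_nat_of_lt_succ fun c => ?_
    simp only [hp, Finset.sum_range_succ]
    have := mul_pos (hτpos c) hgpos
    linarith
  have hper : ∀ l : ℕ, ∑ i ∈ Finset.range ((m+1) * l), τ i = l * T := by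
    intro l
    induction l with
    | zero => simp
    | succ l ihl =>
      rw [Nat.mul_succ, Finset.sum_range_add, ihl]
      have : ∑ i ∈ Finset.range (m+1), τ ((m+1) * l + i) = T := by
        refine Finset.sum_congr rfl fun i _ => ?_
        simp only [hτ]
        congr 1
        ext
        simp
      rw [this]; push_cast; ring
  set s : Fin (m+2) → ℕ := fun j => (m+1) * ∑ i ∈ Finset.range j, k (Fin.ofNat (m+1) i) with hs
  have hps : ∀ j, p (s j) = x + psum (fun i => (r i : ℝ)) j * h := by
    intro j
    simp only [hp, hs, hper, psum_eq, hrk, hg, ← Finset.sum_div]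
    push_cast
    field_simp
  have hsmono : StrictMono s := by
    refine Fin.strictMono_iff_lt_succ.2 fun i => ?_
    simp only [hs, Fin.val_castSucc, Fin.val_succ, Finset.sum_range_succ]
    have := hk (Fin.ofNat (m+1) i)
    exact Nat.mul_lt_mul_of_pos_left (by omega) (by omega)
  have hpI : ∀ c, c ≤ s (Fin.last _) → p c ∈ I := by
    intro c hc
    refine hI.out hx hxI ⟨?_, ?_⟩
    · have := hpmono.monotone (Nat.zero_le c)
      simpa [hp] using this
    · rw [← hps]; exact hpmono.monotone hc
  have key := chain_nonneg (fun i a => ω i (p a))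
    (fun i a => (Fin.snoc ω f : Fin (m+2) → ℝ → ℝ) i (p a)) (by intro i a; simp) (s (Fin.last _))
    (fun u hu huN => hω (fun j => p (u j)) (hpmono.comp hu) fun j => hpI _ (huN j))
    (by
      intro c hc
      have hpc : ∀ j : Fin (m+2), p (c + j) = p c + psum (fun i => t (i + Fin.ofNat (m+1) c)) j * g := by
        intro j
        simp only [hp, psum_eq, Finset.sum_range_add, add_mul, add_assoc]
        congr 3
        refine Finset.sum_congr rfl fun i _ => ?_
        simp only [hτ]
        congr 1
        ext
        simp [Fin.val_add, add_comm]
      have := hcyc (Fin.ofNat (m+1) c) (p c) (hpI c (by omega)) g hgpos (by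
        rw [← hpc]; exact hpI _ (by simpa using hc))
      simp only [← hpc] at this
      exact this)
    _ s hsmono le_rfl (Nat.le_add_left _ _)
  simp only [hps] at key
  exact key
end
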